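/- arXiv:2102.01575 — 2 statements merged into one kernel-verified Lean document; each statement's English description precedes it below -/
import Mathlib

section
/- Let R be a commutative Noetherian local ring and M a nonzero finitely generated R-module with Supp_R(M) = Spec(R). If depth_{R_p}(M_p) ≤ depth(R_p) for all prime ideals p of R, then for every prime p of R, each M_p-regular sequence is R_p-regular. -/
open RingTheory.Sequence IsLocalRing CategoryTheory CategoryTheory.Limits
open scoped TensorProduct

/-- The `I`-depth of the module `M`: the supremum of the lengths of
(weakly) regular sequences on `M` consisting of elements of `I`.
(When `IM ≠ M` this is the common length of maximal `M`-regular sequences in `I`;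
when `IM = M`, in particular when `M = 0`, it is `∞`, matching the usual convention.) -/
noncomputable def rdepth {R : Type*} [CommRing R] (I : Ideal R)
    (M : Type*) [AddCommGroup M] [Module R M] : ℕ∞ :=
  sSup {n : ℕ∞ | ∃ rs : List R, (rs.length : ℕ∞) = n ∧ (∀ r ∈ rs, r ∈ I) ∧
    RingTheory.Sequence.IsWeaklyRegular M rs}

/-
Suppose a weakly `M_p`-regular sequence is not weakly `R_p`-regular, and let `x` be its first
element that fails, after the initial part `xs`. Then `x` is a zero divisor on `R_p/(xs)`, hence
lies in an associated prime `q` of `R_p/(xs)`, and `q` contains `xs` as well. Over `R_q` the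
maximal ideal is associated to `R_q/(xs)`, so this quotient has depth `0`; since factoring out a
regular element lowers the depth by at most one, `depth R_q ≤ |xs|`. But `xs, x` stays weakly
regular on `M_q` and lies in the maximal ideal of `R_q`, so `depth M_q ≥ |xs| + 1`, contradicting
`depth M_q ≤ depth R_q`. Properness costs nothing: if `(rs) = R_p`, then also `(rs) M_p = M_p`.
-/

section Rdepth

open scoped Pointwise

variable {R : Type*} [CommRing R] {I : Ideal R} {M N : Type*} [AddCommGroup M] [Module R M]
  [AddCommGroup N] [Module R N]

lemma length_le_rdepth {rs : List R} (hmem : ∀ r ∈ rs, r ∈ I) (hreg : IsWeaklyRegular M rs) :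
    (rs.length : ℕ∞) ≤ rdepth I M :=
  le_sSup ⟨rs, rfl, hmem, hreg⟩

lemma natCast_le_rdepth_iff {n : ℕ} :
    (n : ℕ∞) ≤ rdepth I M ↔
      ∃ rs : List R, rs.length = n ∧ (∀ r ∈ rs, r ∈ I) ∧ IsWeaklyRegular M rs := by
  refine ⟨fun hn => ?_, fun ⟨rs, hlen, hmem, hreg⟩ => hlen ▸ length_le_rdepth hmem hreg⟩
  obtain _ | n := n
  · exact ⟨[], rfl, by simp, .nil R M⟩
  have hlt : (n : ℕ∞) < rdepth I M := lt_of_lt_of_le (by exact_mod_cast n.lt_succ_self) hn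
  obtain ⟨_, ⟨rs, rfl, hmem, hreg⟩, hlen⟩ := lt_sSup_iff.mp hlt
  rw [← rs.take_append_drop (n + 1), isWeaklyRegular_append_iff] at hreg
  exact ⟨rs.take (n + 1), List.length_take_of_le (by exact_mod_cast hlen),
    fun r hr => hmem r (List.mem_of_mem_take hr), hreg.1⟩

lemma rdepth_eq_zero_of_forall_not_isSMulRegular (hI : ∀ r ∈ I, ¬ IsSMulRegular M r) :
    rdepth I M = 0 := by
  by_contra hne
  obtain ⟨rs, hlen, hmem, hreg⟩ := natCast_le_rdepth_iff.mp
    (show ((1 : ℕ) : ℕ∞) ≤ rdepth I M from mod_cast Order.one_le_iff_ne_zero.mpr hne)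
  obtain ⟨r, rfl⟩ := List.length_eq_one_iff.mp hlen
  exact hI r (hmem r (by simp)) ((isWeaklyRegular_singleton_iff M r).mp hreg)

lemma rdepth_congr (e : M ≃ₗ[R] N) : rdepth I M = rdepth I N := by
  simp only [rdepth, e.isWeaklyRegular_congr]

lemma ideal_smul_top_quotSMulTop_ne_top (hI : I • (⊤ : Submodule R M) ≠ ⊤) {x : R} (hx : x ∈ I) :
    I • (⊤ : Submodule R (QuotSMulTop x M)) ≠ ⊤ := by
  have hle : x • (⊤ : Submodule R M) ≤ I • ⊤ := by
    rw [← Submodule.ideal_span_singleton_smul]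
    exact Submodule.smul_mono_left ((Ideal.span_singleton_le_iff_mem I).mpr hx)
  intro htop
  have hcomap := congrArg (Submodule.comap (x • (⊤ : Submodule R M)).mkQ) htop
  rw [Submodule.comap_smul_top_of_surjective I _ (Submodule.mkQ_surjective _), Submodule.ker_mkQ,
    sup_eq_left.mpr hle, Submodule.comap_top] at hcomap
  exact hI hcomap

lemma isRegular_of_isWeaklyRegular_of_mem (hI : I • (⊤ : Submodule R M) ≠ ⊤) {rs : List R}
    (hmem : ∀ r ∈ rs, r ∈ I) (hreg : IsWeaklyRegular M rs) : IsRegular M rs :=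
  ⟨hreg, fun htop => hI <| top_unique <|
    htop.le.trans <| Submodule.smul_mono_left <| Ideal.span_le.mpr hmem⟩

end Rdepth

section AssociatedPrimes

variable {R : Type*} [CommRing R] {M : Type*} [AddCommGroup M] [Module R M]

lemma not_isSMulRegular_iff_exists_mem_associatedPrimes [IsNoetherianRing R] {r : R} :
    ¬ IsSMulRegular M r ↔ ∃ q ∈ associatedPrimes R M, r ∈ q := by
  have hmem := Set.ext_iff.mp (biUnion_associatedPrimes_eq_compl_regular R M) r
  simpa [iff_comm] using hmem

lemma mem_of_mem_associatedPrimes_quotient_ofList {q : Ideal R} {xs : List R}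
    (hq : q ∈ associatedPrimes R (M ⧸ (Ideal.ofList xs • ⊤ : Submodule R M))) {x : R}
    (hx : x ∈ xs) : x ∈ q := by
  refine hq.annihilator_le ?_
  rw [Submodule.annihilator_top, Submodule.annihilator_quotient, Submodule.mem_colon]
  exact fun m _ => Submodule.smul_mem_smul (Ideal.subset_span hx) Submodule.mem_top

lemma exists_mem_associatedPrimes_of_not_isWeaklyRegular [IsNoetherianRing R] {rs : List R}
    (hrs : ¬ IsWeaklyRegular M rs) :
    ∃ xs x, xs ++ [x] <+: rs ∧ IsWeaklyRegular M xs ∧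
      ∃ q ∈ associatedPrimes R (M ⧸ (Ideal.ofList xs • ⊤ : Submodule R M)), x ∈ q := by
  induction rs using List.reverseRecOn with
  | nil => exact absurd (.nil R M) hrs
  | append_singleton xs x ih =>
    by_cases hxs : IsWeaklyRegular M xs
    · rw [isWeaklyRegular_append_iff, isWeaklyRegular_singleton_iff, not_and,
        not_isSMulRegular_iff_exists_mem_associatedPrimes] at hrs
      exact ⟨xs, x, List.prefix_rfl, hxs, hrs hxs⟩
    · obtain ⟨ys, y, hprefix, hys⟩ := ih hxs
      exact ⟨ys, y, hprefix.trans (List.prefix_append _ _), hys⟩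

end AssociatedPrimes

section Rees

universe u v

variable {R : Type u} [CommRing R] [IsNoetherianRing R] [Small.{v} R] {I : Ideal R}
  {M : Type v} [AddCommGroup M] [Module R M] [Module.Finite R M]

open Abelian

lemma natCast_le_rdepth_iff_subsingleton_ext (hI : I • (⊤ : Submodule R M) ≠ ⊤) {n : ℕ} :
    (n : ℕ∞) ≤ rdepth I M ↔ ∀ i < n,
      Subsingleton (Ext (ModuleCat.of R (Shrink.{v} (R ⧸ I))) (ModuleCat.of R M) i) := by
  have rees := (ModuleCat.exists_isRegular_tfae I n (ModuleCat.of R M) hI.lt_top).out 3 1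
  rw [natCast_le_rdepth_iff, ← rees]
  exact exists_congr fun rs => and_congr_right fun _ => and_congr_right fun hmem =>
    ⟨isRegular_of_isWeaklyRegular_of_mem hI hmem, IsRegular.toIsWeaklyRegular⟩

lemma rdepth_le_rdepth_quotSMulTop_add_one (hI : I • (⊤ : Submodule R M) ≠ ⊤) {x : R}
    (hxI : x ∈ I) (hx : IsSMulRegular M x) :
    rdepth I M ≤ rdepth I (QuotSMulTop x M) + 1 := by
  refine ENat.forall_natCast_le_iff_le.mp fun n hn => ?_
  obtain _ | n := n
  · simp
  rw [natCast_le_rdepth_iff_subsingleton_ext hI] at hn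
  suffices (n : ℕ∞) ≤ rdepth I (QuotSMulTop x M) by exact_mod_cast add_le_add_left this 1
  rw [natCast_le_rdepth_iff_subsingleton_ext (ideal_smul_top_quotSMulTop_ne_top hI hxI)]
  intro i hi
  -- In the long exact sequence of `0 → M → M → M/xM → 0`, `Extⁱ(R/I, M/xM)` sits between
  -- `Extⁱ(R/I, M)` and `Extⁱ⁺¹(R/I, M)`.
  have ext_i := AddCommGrpCat.isZero_of_iff_subsingleton.mpr (hn i (by lia))
  have ext_succ := AddCommGrpCat.isZero_of_iff_subsingleton.mpr (hn (i + 1) (by lia))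
  have les := Ext.covariant_sequence_exact₃' (ModuleCat.of R (Shrink.{v} (R ⧸ I)))
    (IsSMulRegular.smulShortComplex_shortExact (M := ModuleCat.of R M) hx) i (i + 1) rfl
  exact AddCommGrpCat.subsingleton_of_isZero <|
    les.isZero_of_both_zeros (ext_i.eq_zero_of_src _) (ext_succ.eq_zero_of_tgt _)

lemma rdepth_le_rdepth_quotient_add_length (hI : I • (⊤ : Submodule R M) ≠ ⊤) {xs : List R}
    (hxsI : ∀ x ∈ xs, x ∈ I) (hxs : IsWeaklyRegular M xs) :
    rdepth I M ≤ rdepth I (M ⧸ (Ideal.ofList xs • ⊤ : Submodule R M)) + xs.length := by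
  induction xs generalizing M with
  | nil =>
    have hbot : Ideal.ofList ([] : List R) • (⊤ : Submodule R M) = ⊥ := by
      rw [Ideal.ofList_nil, Submodule.bot_smul]
    rw [rdepth_congr (Submodule.quotEquivOfEqBot _ hbot), List.length_nil, Nat.cast_zero, add_zero]
  | cons x xs ih =>
    rw [List.forall_mem_cons] at hxsI
    rw [isWeaklyRegular_cons_iff] at hxs
    calc rdepth I M
      _ ≤ rdepth I (QuotSMulTop x M) + 1 := rdepth_le_rdepth_quotSMulTop_add_one hI hxsI.1 hxs.1
      _ ≤ rdepth I (QuotSMulTop x M ⧸ (Ideal.ofList xs • ⊤ : Submodule R (QuotSMulTop x M))) +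
            xs.length + 1 := by
          gcongr
          exact ih (ideal_smul_top_quotSMulTop_ne_top hI hxsI.1) hxsI.2 hxs.2
      _ = rdepth I (M ⧸ (Ideal.ofList (x :: xs) • ⊤ : Submodule R M)) + (x :: xs).length := by
          rw [rdepth_congr (Submodule.quotOfListConsSMulTopEquivQuotSMulTopInner M x xs),
            List.length_cons, Nat.cast_succ, add_assoc]

lemma rdepth_le_length_of_mem_associatedPrimes (hI : I • (⊤ : Submodule R M) ≠ ⊤) {xs : List R}
    (hxs : IsWeaklyRegular M xs)
    (hass : I ∈ associatedPrimes R (M ⧸ (Ideal.ofList xs • ⊤ : Submodule R M))) :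
    rdepth I M ≤ xs.length := by
  have hzero : rdepth I (M ⧸ (Ideal.ofList xs • ⊤ : Submodule R M)) = 0 :=
    rdepth_eq_zero_of_forall_not_isSMulRegular fun r hr =>
      not_isSMulRegular_iff_exists_mem_associatedPrimes.mpr ⟨I, hass, hr⟩
  simpa only [hzero, zero_add] using rdepth_le_rdepth_quotient_add_length hI
    (fun _ => mem_of_mem_associatedPrimes_quotient_ofList hass) hxs

end Rees

section Localization

universe v

variable {A B : Type*} [CommRing A] [CommRing B] [Algebra A B] (T : Submonoid A)
  [IsLocalization T B] {M : Type*} [AddCommGroup M] [Module A M]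
  {N : Type v} [AddCommGroup N] [Module A N] [Module B N] [IsScalarTower A B N]

include T in
lemma length_le_rdepth_of_isLocalizedModule (f : M →ₗ[A] N) [IsLocalizedModule T f] {J : Ideal B}
    {rs : List A} (hmem : ∀ r ∈ rs, algebraMap A B r ∈ J) (hreg : IsWeaklyRegular M rs) :
    (rs.length : ℕ∞) ≤ rdepth J N := by
  simpa using length_le_rdepth (I := J) (by simpa using hmem)
    (hreg.of_isLocalizedModule B T f)

lemma mem_associatedPrimes_quotient_ofList_map_smul_top (f : M →ₗ[A] N) [IsLocalizedModule T f]
    {Q : Ideal B} {xs : List A} (hass : Q.comap (algebraMap A B) ∈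
      associatedPrimes A (M ⧸ (Ideal.ofList xs • ⊤ : Submodule A M))) :
    Q ∈ associatedPrimes B
      (N ⧸ (Ideal.ofList (xs.map (algebraMap A B)) • ⊤ : Submodule B N)) := by
  have hloc : (Ideal.ofList xs • ⊤ : Submodule A M).localized' B T f =
      Ideal.ofList (xs.map (algebraMap A B)) • ⊤ := by
    rw [Submodule.localized'_smul, Ideal.localized'_eq_map, Submodule.localized'_top,
      Ideal.map_ofList]
  rw [← hloc]
  open Module.associatedPrimes in
  exact mem_associatedPrimes_of_comap_mem_associatedPrimes_of_isLocalizedModule T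
    ((Ideal.ofList xs • ⊤ : Submodule A M).toLocalizedQuotient' B T f) Q hass

lemma rdepth_maximalIdeal_le_length_of_comap_mem_associatedPrimes [IsNoetherianRing B]
    [IsLocalRing B] [Small.{v} B] [Module.Finite B N] (f : M →ₗ[A] N) [IsLocalizedModule T f]
    {xs : List A} (hxs : IsWeaklyRegular M xs)
    (hass : (maximalIdeal B).comap (algebraMap A B) ∈
      associatedPrimes A (M ⧸ (Ideal.ofList xs • ⊤ : Submodule A M))) :
    rdepth (maximalIdeal B) N ≤ xs.length := by
  have hassB := mem_associatedPrimes_quotient_ofList_map_smul_top T f hass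
  have : Nontrivial N := by
    by_contra htriv
    rw [not_nontrivial_iff_subsingleton] at htriv
    exact not_isAssociatedPrime_of_subsingleton hassB
  have hne : maximalIdeal B • (⊤ : Submodule B N) ≠ ⊤ :=
    (Submodule.top_ne_ideal_smul_of_le_jacobson_annihilator (maximalIdeal_le_jacobson _)).symm
  simpa using rdepth_le_length_of_mem_associatedPrimes hne (hxs.of_isLocalizedModule B T f) hassB

end Localization

section LocalizationTower

variable {R A B : Type*} [CommRing R] [CommRing A] [CommRing B] [Algebra R A] [Algebra R B]
  [Algebra A B] [IsScalarTower R A B] (S : Submonoid R) [IsLocalization S A]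

include S in
lemma comap_maximalIdeal_of_isLocalization_atPrime_comap (q : Ideal A) [q.IsPrime] [IsLocalRing B]
    [IsLocalization.AtPrime B (q.comap (algebraMap R A))] :
    (maximalIdeal B).comap (algebraMap A B) = q := by
  apply (IsLocalization.orderEmbedding S A).injective
  change ((maximalIdeal B).comap (algebraMap A B)).comap (algebraMap R A) =
    q.comap (algebraMap R A)
  rw [Ideal.comap_comap, ← IsScalarTower.algebraMap_eq]
  exact IsLocalization.AtPrime.under_maximalIdeal B (q.comap (algebraMap R A))

lemma le_primeCompl_comap_of_isLocalization (q : Ideal A) [q.IsPrime] :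
    S ≤ (q.comap (algebraMap R A)).primeCompl := fun s hs hsq =>
  Ideal.IsPrime.ne_top' (Ideal.eq_top_of_isUnit_mem q hsq (IsLocalization.map_units A ⟨s, hs⟩))

lemma length_le_rdepth_of_isLocalizedModule_of_le {T : Submonoid R} (hST : S ≤ T)
    [IsLocalization T B]
    {M M₁ M₂ : Type*} [AddCommGroup M] [Module R M]
    [AddCommGroup M₁] [Module R M₁] [Module A M₁] [IsScalarTower R A M₁]
    [AddCommGroup M₂] [Module R M₂] [Module B M₂] [IsScalarTower R B M₂]
    (f : M →ₗ[R] M₁) [IsLocalizedModule S f] (g : M →ₗ[R] M₂) [IsLocalizedModule T g]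
    {J : Ideal B} {rs : List A} (hmem : ∀ r ∈ rs, algebraMap A B r ∈ J)
    (hreg : IsWeaklyRegular M₁ rs) : (rs.length : ℕ∞) ≤ rdepth J M₂ := by
  let : Module A M₂ := Module.compHom M₂ (algebraMap A B)
  have : IsScalarTower A B M₂ := .of_algebraMap_smul fun _ _ => rfl
  have : IsScalarTower R A M₂ := .of_algebraMap_smul fun r m => by
    rw [← algebraMap_smul B, ← IsScalarTower.algebraMap_apply, algebraMap_smul]
  have : IsLocalization (Algebra.algebraMapSubmonoid A T) B :=
    IsLocalization.isLocalization_of_submonoid_le A B S T hST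
  let l : M₁ →ₗ[A] M₂ := (IsLocalizedModule.liftOfLE S T hST f g).extendScalarsOfIsLocalization S A
  have : IsLocalizedModule T (l.restrictScalars R) :=
    inferInstanceAs (IsLocalizedModule T (IsLocalizedModule.liftOfLE S T hST f g))
  have : IsLocalizedModule (Algebra.algebraMapSubmonoid A T) l := .of_restrictScalars T l
  exact length_le_rdepth_of_isLocalizedModule (Algebra.algebraMapSubmonoid A T) l hmem hreg

end LocalizationTower

theorem isWeaklyRegular_of_forall_rdepth_atPrime_le {R : Type*} [CommRing R] [IsNoetherianRing R]
    {M : Type*} [AddCommGroup M] [Module R M]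
    (h : ∀ p : PrimeSpectrum R,
      rdepth (maximalIdeal (Localization.AtPrime p.asIdeal))
          (LocalizedModule p.asIdeal.primeCompl M) ≤
        rdepth (maximalIdeal (Localization.AtPrime p.asIdeal))
          (Localization.AtPrime p.asIdeal))
    (S : Submonoid R) {A : Type*} [CommRing A] [Algebra R A] [IsLocalization S A]
    {M₁ : Type*} [AddCommGroup M₁] [Module R M₁] [Module A M₁] [IsScalarTower R A M₁]
    (f : M →ₗ[R] M₁) [IsLocalizedModule S f] {rs : List A} (hrs : IsWeaklyRegular M₁ rs) :
    IsWeaklyRegular A rs := by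
  have : IsNoetherianRing A := IsLocalization.isNoetherianRing S A inferInstance
  by_contra hA
  obtain ⟨xs, x, ⟨ys, rfl⟩, hxs, q, hass, hxq⟩ :=
    exists_mem_associatedPrimes_of_not_isWeaklyRegular hA
  have : q.IsPrime := hass.isPrime
  let p : PrimeSpectrum R := ⟨q.comap (algebraMap R A), inferInstance⟩
  let T : Submonoid R := p.asIdeal.primeCompl
  let B := Localization.AtPrime p.asIdeal
  have hST : S ≤ T := le_primeCompl_comap_of_isLocalization S q
  let : Algebra A B := IsLocalization.localizationAlgebraOfSubmonoidLe A B S T hST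
  have : IsScalarTower R A B :=
    IsLocalization.localization_isScalarTower_of_submonoid_le A B S T hST
  have : IsLocalization (Algebra.algebraMapSubmonoid A T) B :=
    IsLocalization.isLocalization_of_submonoid_le A B S T hST
  have : IsNoetherianRing B := IsLocalization.isNoetherianRing T B inferInstance
  have hcomap : (maximalIdeal B).comap (algebraMap A B) = q :=
    comap_maximalIdeal_of_isLocalization_atPrime_comap S q
  have hmem : ∀ r ∈ xs ++ [x], algebraMap A B r ∈ maximalIdeal B := by
    simp only [← Ideal.mem_comap, hcomap, List.forall_mem_append, List.forall_mem_singleton]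
    exact ⟨fun _ => mem_of_mem_associatedPrimes_quotient_ofList hass, hxq⟩
  have hlower : ((xs ++ [x]).length : ℕ∞) ≤ rdepth (maximalIdeal B) (LocalizedModule T M) :=
    length_le_rdepth_of_isLocalizedModule_of_le S hST f (LocalizedModule.mkLinearMap T M) hmem
      ((isWeaklyRegular_append_iff _ _ _).mp hrs).1
  have hupper : rdepth (maximalIdeal B) B ≤ xs.length :=
    rdepth_maximalIdeal_le_length_of_comap_mem_associatedPrimes (Algebra.algebraMapSubmonoid A T)
      (Algebra.linearMap A B) hxs (by rwa [hcomap])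
  have hlength : (xs ++ [x]).length ≤ xs.length := by
    exact_mod_cast hlower.trans ((h p).trans hupper)
  simp at hlength

theorem stmt3_general {R : Type*} [CommRing R] [IsNoetherianRing R]
    (M : Type*) [AddCommGroup M] [Module R M]
    (h : ∀ p : PrimeSpectrum R,
      rdepth (maximalIdeal (Localization.AtPrime p.asIdeal))
          (LocalizedModule p.asIdeal.primeCompl M) ≤
        rdepth (maximalIdeal (Localization.AtPrime p.asIdeal))
          (Localization.AtPrime p.asIdeal)) :
    ∀ p : PrimeSpectrum R, ∀ rs : List (Localization.AtPrime p.asIdeal),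
      RingTheory.Sequence.IsRegular (LocalizedModule p.asIdeal.primeCompl M) rs →
        RingTheory.Sequence.IsRegular (Localization.AtPrime p.asIdeal) rs := by
  intro p rs hrs
  refine ⟨isWeaklyRegular_of_forall_rdepth_atPrime_le h p.asIdeal.primeCompl
    (LocalizedModule.mkLinearMap _ M) hrs.toIsWeaklyRegular, fun htop => hrs.top_ne_smul ?_⟩
  rw [smul_eq_mul, Ideal.mul_top] at htop
  rw [← htop, Submodule.top_smul]

/-- If `M` has full support and `depth_{R_p}(M_p) ≤ depth(R_p)` for all primes `p`,
then for every prime `p` each `M_p`-regular sequence is `R_p`-regular. -/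
theorem stmt3 {R : Type*} [CommRing R] [IsNoetherianRing R] [IsLocalRing R]
    (M : Type*) [AddCommGroup M] [Module R M] [Module.Finite R M] [Nontrivial M]
    (hsupp : Module.support R M = Set.univ)
    (h : ∀ p : PrimeSpectrum R,
      rdepth (maximalIdeal (Localization.AtPrime p.asIdeal))
          (LocalizedModule p.asIdeal.primeCompl M) ≤
        rdepth (maximalIdeal (Localization.AtPrime p.asIdeal))
          (Localization.AtPrime p.asIdeal)) :
    ∀ p : PrimeSpectrum R, ∀ rs : List (Localization.AtPrime p.asIdeal),
      RingTheory.Sequence.IsRegular (LocalizedModule p.asIdeal.primeCompl M) rs →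
        RingTheory.Sequence.IsRegular (Localization.AtPrime p.asIdeal) rs := by
  exact stmt3_general M h
end

section
/- Let R = k[[x,y,z]]/(xy) and M = R/(x^2). Then M is not Tor-rigid: with N = R/(y) one has Tor_1^R(M, N) = 0 but Tor_2^R(M, N) ≠ 0. -/
open RingTheory.Sequence IsLocalRing CategoryTheory CategoryTheory.Limits
open scoped TensorProduct

/-!
Let `x`, `y` be elements of `R` whose annihilators are `(y)` and `(x)`, as happens for the images of
two nonzerodivisors `a`, `b` in `A / (ab)`. Then `⋯ ⟶ R --x--> R --y--> R ⟶ R / (y)` is a free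
resolution, so for every module `M` the modules `Tor_n (M, R / (y))` with `n > 0` are alternately
`ann_M y / x M` (`n` odd) and `ann_M x / y M` (`n` even). For `M = R / (x ^ m)` and
`(x) ∩ (y) = 0`, the first of these vanishes, while `x ^ (m - 1)` is nonzero in the second unless
`x` and `y` generate the unit ideal.
-/

universe u

section ScalarComplex

variable {R : Type*} [CommRing R] {x y : R} {C : Type*} [Category* C] [Preadditive C] [Linear R C]

lemma smul_id_comp_smul_id_eq_zero (hxy : x * y = 0) (X : C) : (x • 𝟙 X) ≫ (y • 𝟙 X) = 0 := by
  rw [Linear.smul_comp, Category.id_comp, smul_smul, hxy, zero_smul]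

/-- The complex `X --x--> X --y--> X`, for scalars `x`, `y` with `x * y = 0`. -/
def scalarShortComplex (hxy : x * y = 0) (X : C) : ShortComplex C :=
  .mk (x • 𝟙 X) (y • 𝟙 X) (smul_id_comp_smul_id_eq_zero hxy X)

/-- The periodic complex `⋯ --y--> X --x--> X --y--> X ⟶ 0`, for scalars `x`, `y` with `x * y = 0`.
The differential is `y` out of odd degrees and `x` out of positive even degrees. -/
noncomputable def scalarChainComplex (hxy : x * y = 0) (X : C) : ChainComplex C ℕ :=
  HomologicalComplex.alternatingConst X (smul_id_comp_smul_id_eq_zero hxy X)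
    (smul_id_comp_smul_id_eq_zero ((mul_comm y x).trans hxy) X)
    fun _ _ ↦ ComplexShape.down_nat_odd_add

lemma scalarChainComplex_d_succ (hxy : x * y = 0) (X : C) (n : ℕ) :
    (scalarChainComplex hxy X).d (n + 1) n = (if Even (n + 1) then x else y) • 𝟙 X := by
  rw [ite_smul]
  exact dif_pos rfl

lemma scalarChainComplex_exactAt_iff_of_odd (hxy : x * y = 0) (X : C) {n : ℕ} (hn : Odd n) :
    (scalarChainComplex hxy X).ExactAt n ↔ (scalarShortComplex hxy X).Exact := by
  obtain ⟨k, rfl⟩ := hn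
  rw [HomologicalComplex.exactAt_iff' _ (2 * k + 2) (2 * k + 1) (2 * k) (by simp) (by simp)]
  exact ShortComplex.exact_iff_of_iso <|
    HomologicalComplex.alternatingConstScIsoOdd X _ _ _ (by simp) (by simp) (odd_two_mul_add_one k)

lemma scalarChainComplex_exactAt_iff_of_even (hxy : x * y = 0) (X : C) {n : ℕ} (hn : Even n)
    (hn₀ : n ≠ 0) :
    (scalarChainComplex hxy X).ExactAt n ↔
      (scalarShortComplex ((mul_comm y x).trans hxy) X).Exact := by
  obtain ⟨k, rfl⟩ := Nat.exists_eq_succ_of_ne_zero hn₀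
  rw [HomologicalComplex.exactAt_iff' _ (k + 2) (k + 1) k (by simp) (by simp)]
  exact ShortComplex.exact_iff_of_iso <|
    HomologicalComplex.alternatingConstScIsoEven X _ _ _ (by simp) (by simp) hn

/-- A linear functor sends the periodic complex on `X` to the periodic complex on its value at `X`,
here replaced by any isomorphic object. -/
noncomputable def mapScalarChainComplexIso {D : Type*} [Category* D] [Preadditive D] [Linear R D]
    (hxy : x * y = 0) (F : C ⥤ D) [F.Additive] [F.Linear R] {X : C} {Y : D} (e : F.obj X ≅ Y) :
    (F.mapHomologicalComplex _).obj (scalarChainComplex hxy X) ≅ scalarChainComplex hxy Y :=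
  HomologicalComplex.Hom.isoOfComponents (fun _ ↦ e) <| by
    rintro _ j rfl
    have comm (r : R) : e.hom ≫ (r • 𝟙 Y) = F.map (r • 𝟙 X) ≫ e.hom := by simp [Functor.map_smul]
    rw [Functor.mapHomologicalComplex_obj_d, scalarChainComplex_d_succ, scalarChainComplex_d_succ]
    exact comm _

end ScalarComplex

section Tor

variable {R : Type u} [CommRing R] {x y : R}

lemma scalarShortComplex_exact_iff (hxy : x * y = 0) (M : ModuleCat.{u} R) :
    (scalarShortComplex hxy M).Exact ↔ Function.Exact (x • · : M → M) (y • · : M → M) :=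
  ShortComplex.ShortExact.moduleCat_exact_iff_function_exact _

lemma exact_smul_id_mkQ (y : R) :
    Function.Exact (y • 𝟙 (ModuleCat.of R R) : ModuleCat.of R R ⟶ _).hom
      (Ideal.span {y}).mkQ := by
  intro (a : R)
  change Submodule.Quotient.mk a = 0 ↔ ∃ b, y * b = a
  simp only [Submodule.Quotient.mk_eq_zero, Ideal.mem_span_singleton', mul_comm]

lemma smul_id_comp_mkQ (y : R) :
    (y • 𝟙 (ModuleCat.of R R)) ≫ ModuleCat.ofHom (Ideal.span {y}).mkQ = 0 := by
  ext
  exact (exact_smul_id_mkQ y).apply_apply_eq_zero 1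

/-- Elements `x`, `y` of `R` form an exact pair if `ann x = (y)` and `ann y = (x)`, so that
`R / (y)` has a periodic free resolution. Exact pairs of zero divisors are the exact pairs in which
neither element is zero or a unit. -/
structure IsExactPair {R : Type*} [CommRing R] (x y : R) : Prop where
  exact : Function.Exact (x * ·) (y * ·)
  exact_symm : Function.Exact (y * ·) (x * ·)

namespace IsExactPair

lemma symm (h : IsExactPair x y) : IsExactPair y x := ⟨h.exact_symm, h.exact⟩

lemma mul_eq_zero (h : IsExactPair x y) : x * y = 0 := by
  simpa [mul_comm] using h.exact.apply_apply_eq_zero 1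

lemma exactAt_scalarChainComplex (h : IsExactPair x y) {n : ℕ} (hn : n ≠ 0) :
    (scalarChainComplex h.mul_eq_zero (ModuleCat.of R R)).ExactAt n := by
  rcases n.even_or_odd with heven | hodd
  · rw [scalarChainComplex_exactAt_iff_of_even _ _ heven hn, scalarShortComplex_exact_iff]
    exact h.exact_symm
  · rw [scalarChainComplex_exactAt_iff_of_odd _ _ hodd, scalarShortComplex_exact_iff]
    exact h.exact

/-- The augmentation of the periodic complex on `R` onto `R / (y)`. -/
noncomputable def resolutionπ (h : IsExactPair x y) :
    scalarChainComplex h.mul_eq_zero (ModuleCat.of R R) ⟶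
      (ChainComplex.single₀ (ModuleCat.{u} R)).obj (ModuleCat.of R (R ⧸ Ideal.span {y})) :=
  (ChainComplex.toSingle₀Equiv _ _).symm ⟨ModuleCat.ofHom (Ideal.span {y}).mkQ, by
    rw [scalarChainComplex_d_succ, if_neg (by decide)]
    exact smul_id_comp_mkQ y⟩

lemma resolutionπ_f_zero (h : IsExactPair x y) :
    h.resolutionπ.f 0 = ModuleCat.ofHom (Ideal.span {y}).mkQ :=
  ChainComplex.toSingle₀Equiv_symm_apply_f_zero _ _

lemma quasiIso_resolutionπ (h : IsExactPair x y) : QuasiIso h.resolutionπ where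
  quasiIsoAt n := by
    rcases eq_or_ne n 0 with rfl | hn
    · rw [ChainComplex.quasiIsoAt₀_iff, ShortComplex.quasiIso_iff_of_zeros' _ rfl rfl rfl,
        ShortComplex.ShortExact.moduleCat_exact_iff_function_exact, ModuleCat.epi_iff_surjective]
      change Function.Exact
          (ConcreteCategory.hom ((scalarChainComplex h.mul_eq_zero (ModuleCat.of R R)).d 1 0))
          (ConcreteCategory.hom (h.resolutionπ.f 0)) ∧
        Function.Surjective (ConcreteCategory.hom (h.resolutionπ.f 0))
      rw [scalarChainComplex_d_succ, if_neg (by decide), resolutionπ_f_zero]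
      exact ⟨exact_smul_id_mkQ y, Submodule.mkQ_surjective _⟩
    · rw [quasiIsoAt_iff_exactAt _ _ (h.exactAt_scalarChainComplex hn)]
      exact HomologicalComplex.exactAt_single_obj _ _ _ _ hn

/-- The periodic free resolution `⋯ --y--> R --x--> R --y--> R ⟶ R / (y)`. -/
noncomputable def resolution (h : IsExactPair x y) :
    ProjectiveResolution (ModuleCat.of R (R ⧸ Ideal.span {y})) where
  complex := scalarChainComplex h.mul_eq_zero (ModuleCat.of R R)
  projective _ := inferInstanceAs (Projective (ModuleCat.of R R))
  π := h.resolutionπ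
  quasiIso := h.quasiIso_resolutionπ

lemma isZero_Tor_iff_exactAt (h : IsExactPair x y) (M : ModuleCat.{u} R) (n : ℕ) :
    IsZero (((Tor (ModuleCat.{u} R) n).obj M).obj (ModuleCat.of R (R ⧸ Ideal.span {y}))) ↔
      (scalarChainComplex h.mul_eq_zero M).ExactAt n := by
  rw [HomologicalComplex.exactAt_iff_isZero_homology]
  exact (h.resolution.isoLeftDerivedObj ((MonoidalCategory.tensoringLeft _).obj M) n ≪≫
    HomologicalComplex.homologyMapIso
      (mapScalarChainComplexIso h.mul_eq_zero _ (MonoidalCategory.rightUnitor M)) n).isZero_iff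

theorem isZero_Tor_iff_of_odd (h : IsExactPair x y) (M : ModuleCat.{u} R) {n : ℕ} (hn : Odd n) :
    IsZero (((Tor (ModuleCat.{u} R) n).obj M).obj (ModuleCat.of R (R ⧸ Ideal.span {y}))) ↔
      Function.Exact (x • · : M → M) (y • · : M → M) := by
  rw [h.isZero_Tor_iff_exactAt, scalarChainComplex_exactAt_iff_of_odd _ _ hn,
    scalarShortComplex_exact_iff]

theorem isZero_Tor_iff_of_even (h : IsExactPair x y) (M : ModuleCat.{u} R) {n : ℕ} (hn : Even n)
    (hn₀ : n ≠ 0) :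
    IsZero (((Tor (ModuleCat.{u} R) n).obj M).obj (ModuleCat.of R (R ⧸ Ideal.span {y}))) ↔
      Function.Exact (y • · : M → M) (x • · : M → M) := by
  rw [h.isZero_Tor_iff_exactAt, scalarChainComplex_exactAt_iff_of_even _ _ hn hn₀,
    scalarShortComplex_exact_iff]

end IsExactPair

end Tor

section QuotientPow

variable {R : Type*} [CommRing R] {x y : R}

namespace IsExactPair

lemma dvd_of_dvd_mul (h : IsExactPair x y) (hdisj : Disjoint (Ideal.span {x}) (Ideal.span {y}))
    {r : R} (hr : y ∣ x * r) : y ∣ r := by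
  have hxr : x * r = 0 := Submodule.disjoint_def.1 hdisj _
    (Ideal.mem_span_singleton.2 (dvd_mul_right x r)) (Ideal.mem_span_singleton.2 hr)
  obtain ⟨s, hs⟩ := (h.exact_symm r).1 hxr
  exact ⟨s, hs.symm⟩

lemma dvd_of_dvd_pow_mul (h : IsExactPair x y)
    (hdisj : Disjoint (Ideal.span {x}) (Ideal.span {y})) {r : R} (m : ℕ) (hr : y ∣ x ^ m * r) :
    y ∣ r := by
  induction m with
  | zero => simpa using hr
  | succ m ih => exact ih (h.dvd_of_dvd_mul hdisj (by rwa [← mul_assoc, ← pow_succ']))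

lemma exact_quotient_pow (h : IsExactPair x y)
    (hdisj : Disjoint (Ideal.span {x}) (Ideal.span {y})) {m : ℕ} (hm : m ≠ 0) :
    Function.Exact (x • · : R ⧸ Ideal.span {x ^ m} → R ⧸ Ideal.span {x ^ m})
      (y • · : R ⧸ Ideal.span {x ^ m} → R ⧸ Ideal.span {x ^ m}) := by
  intro z
  constructor
  · obtain ⟨r, rfl⟩ := Ideal.Quotient.mk_surjective z
    intro hr
    have hpow : x ^ m ∣ y * r := by
      rwa [← Ideal.mem_span_singleton, ← Ideal.Quotient.eq_zero_iff_mem]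
    obtain ⟨s, rfl⟩ := h.symm.dvd_of_dvd_mul hdisj.symm ((dvd_pow_self x hm).trans hpow)
    exact ⟨Ideal.Quotient.mk _ s, rfl⟩
  · rintro ⟨w, rfl⟩
    simp only [smul_smul, h.symm.mul_eq_zero, zero_smul]

lemma isCoprime_of_exact_quotient_pow (h : IsExactPair x y)
    (hdisj : Disjoint (Ideal.span {x}) (Ideal.span {y})) {m : ℕ} (hm : m ≠ 0)
    (hexact : Function.Exact (y • · : R ⧸ Ideal.span {x ^ m} → R ⧸ Ideal.span {x ^ m})
      (x • · : R ⧸ Ideal.span {x ^ m} → R ⧸ Ideal.span {x ^ m})) :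
    IsCoprime x y := by
  obtain ⟨k, rfl⟩ := Nat.exists_eq_succ_of_ne_zero hm
  have hzero : x • Ideal.Quotient.mk (Ideal.span {x ^ (k + 1)}) (x ^ k) = 0 :=
    Ideal.Quotient.eq_zero_iff_mem.2 <|
      Ideal.mem_span_singleton.2 (dvd_of_eq (pow_succ' x k))
  obtain ⟨w, hw⟩ := (hexact _).1 hzero
  obtain ⟨r, rfl⟩ := Ideal.Quotient.mk_surjective w
  obtain ⟨c, hc⟩ : x ^ (k + 1) ∣ y * r - x ^ k := by
    rw [← Ideal.mem_span_singleton, ← Ideal.Quotient.eq]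
    exact hw
  obtain ⟨d, hd⟩ : y ∣ 1 + x * c :=
    h.dvd_of_dvd_pow_mul hdisj k ⟨r, by linear_combination -hc⟩
  exact ⟨-c, d, by linear_combination -hd⟩

end IsExactPair

end QuotientPow

section QuotientMul

variable {A : Type*} [CommRing A] {a b : A}

lemma exact_mk_mul {I : Ideal A} (hI : I = Ideal.span {a * b}) (hb : b ∈ nonZeroDivisors A) :
    Function.Exact (Ideal.Quotient.mk I a * ·) (Ideal.Quotient.mk I b * ·) := by
  subst hI
  intro z
  constructor
  · obtain ⟨c, rfl⟩ := Ideal.Quotient.mk_surjective z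
    intro (hc : Ideal.Quotient.mk _ b * Ideal.Quotient.mk _ c = 0)
    rw [← map_mul, Ideal.Quotient.eq_zero_iff_mem, Ideal.mem_span_singleton, mul_comm a b] at hc
    obtain ⟨d, rfl⟩ := (dvd_cancel_left_mem_nonZeroDivisors hb).1 hc
    exact ⟨Ideal.Quotient.mk _ d, (map_mul _ _ _).symm⟩
  · rintro ⟨w, rfl⟩
    have hba : Ideal.Quotient.mk (Ideal.span {a * b}) (b * a) = 0 := by
      rw [mul_comm]
      exact Ideal.Quotient.mk_singleton_self _
    simp only [← mul_assoc, ← map_mul, hba, zero_mul]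

lemma isExactPair_mk (ha : a ∈ nonZeroDivisors A) (hb : b ∈ nonZeroDivisors A) :
    IsExactPair (Ideal.Quotient.mk (Ideal.span {a * b}) a) (Ideal.Quotient.mk _ b) :=
  ⟨exact_mk_mul rfl hb, exact_mk_mul (by rw [mul_comm]) ha⟩

lemma disjoint_span_mk (hab : ∀ c, a ∣ b * c → a ∣ c) :
    Disjoint (Ideal.span {Ideal.Quotient.mk (Ideal.span {a * b}) a})
      (Ideal.span {Ideal.Quotient.mk _ b}) := by
  rw [Submodule.disjoint_def]
  intro z hza hzb
  obtain ⟨p, rfl⟩ := Ideal.mem_span_singleton.1 hza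
  obtain ⟨q, hq⟩ := Ideal.mem_span_singleton.1 hzb
  obtain ⟨p, rfl⟩ := Ideal.Quotient.mk_surjective p
  obtain ⟨q, rfl⟩ := Ideal.Quotient.mk_surjective q
  obtain ⟨d, hd⟩ : a * b ∣ a * p - b * q := by
    rwa [← Ideal.mem_span_singleton, ← Ideal.Quotient.eq, map_mul, map_mul]
  obtain ⟨e, rfl⟩ := hab q ⟨p - b * d, by linear_combination -hd⟩
  rw [hq, ← map_mul, Ideal.Quotient.eq_zero_iff_mem, Ideal.mem_span_singleton]
  exact ⟨e, by ring⟩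

lemma isCoprime_of_isCoprime_mk
    (h : IsCoprime (Ideal.Quotient.mk (Ideal.span {a * b}) a) (Ideal.Quotient.mk _ b)) :
    IsCoprime a b := by
  obtain ⟨u, v, huv⟩ := h
  obtain ⟨u, rfl⟩ := Ideal.Quotient.mk_surjective u
  obtain ⟨v, rfl⟩ := Ideal.Quotient.mk_surjective v
  obtain ⟨d, hd⟩ : a * b ∣ u * a + v * b - 1 := by
    rwa [← Ideal.mem_span_singleton, ← Ideal.Quotient.eq, map_add, map_mul, map_mul, map_one]
  exact ⟨u - b * d, v, by linear_combination hd⟩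

end QuotientMul

section PowerSeries

variable {σ k : Type*} [CommRing k]

open MvPowerSeries

lemma X_dvd_of_X_dvd_X_mul {s t : σ} (hst : s ≠ t) {f : MvPowerSeries σ k}
    (h : (X s : MvPowerSeries σ k) ∣ X t * f) : (X s : MvPowerSeries σ k) ∣ f := by
  rw [X_dvd_iff] at h ⊢
  intro m hm
  have hcoeff := h (Finsupp.single t 1 + m) (by simp [hm, hst])
  rwa [X, coeff_add_monomial_mul, one_mul] at hcoeff

lemma not_isCoprime_X [Nontrivial k] (s t : σ) :
    ¬ IsCoprime (X s : MvPowerSeries σ k) (X t) := by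
  intro h
  have hconst := h.map (constantCoeff (σ := σ) (R := k))
  rw [constantCoeff_X, constantCoeff_X] at hconst
  exact not_isCoprime_zero_zero hconst

lemma isExactPair_mk_X (s t : σ) :
    IsExactPair (Ideal.Quotient.mk (Ideal.span {(X s * X t : MvPowerSeries σ k)}) (X s))
      (Ideal.Quotient.mk _ (X t)) :=
  isExactPair_mk X_mem_nonzeroDivisors X_mem_nonzeroDivisors

lemma disjoint_span_mk_X {s t : σ} (hst : s ≠ t) :
    Disjoint
      (Ideal.span {Ideal.Quotient.mk (Ideal.span {(X s * X t : MvPowerSeries σ k)}) (X s)})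
      (Ideal.span {Ideal.Quotient.mk _ (X t)}) :=
  disjoint_span_mk fun _ ↦ X_dvd_of_X_dvd_X_mul hst

lemma not_isCoprime_mk_X [Nontrivial k] (s t : σ) :
    ¬ IsCoprime (Ideal.Quotient.mk (Ideal.span {(X s * X t : MvPowerSeries σ k)}) (X s))
      (Ideal.Quotient.mk _ (X t)) :=
  fun h ↦ not_isCoprime_X s t (isCoprime_of_isCoprime_mk h)

end PowerSeries

theorem stmt7_general {R : Type u} [CommRing R] {x y : R} (h : IsExactPair x y)
    (hdisj : Disjoint (Ideal.span {x}) (Ideal.span {y})) (hxy : ¬ IsCoprime x y)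
    {m : ℕ} (hm : m ≠ 0) (n : ℕ) :
    (Odd n → IsZero (((Tor (ModuleCat R) n).obj (ModuleCat.of R (R ⧸ Ideal.span {x ^ m}))).obj
        (ModuleCat.of R (R ⧸ Ideal.span {y})))) ∧
    (Even n → n ≠ 0 →
      ¬ IsZero (((Tor (ModuleCat R) n).obj (ModuleCat.of R (R ⧸ Ideal.span {x ^ m}))).obj
        (ModuleCat.of R (R ⧸ Ideal.span {y})))) :=
  ⟨fun hn ↦ (h.isZero_Tor_iff_of_odd _ hn).2 (h.exact_quotient_pow hdisj hm), fun hn hn₀ htor ↦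
    hxy (h.isCoprime_of_exact_quotient_pow hdisj hm ((h.isZero_Tor_iff_of_even _ hn hn₀).1 htor))⟩

/-- In `R = k[[x,y,z]]/(xy)`, the module `M = R/(x²)` is not Tor-rigid:
for `N = R/(y)` one has `Tor₁(M,N) = 0` but `Tor₂(M,N) ≠ 0`. -/
theorem stmt7 {k : Type} [Field k]
    (x y :
      MvPowerSeries (Fin 3) k ⧸
        Ideal.span {(MvPowerSeries.X 0 * MvPowerSeries.X 1 : MvPowerSeries (Fin 3) k)})
    (hx : x = Ideal.Quotient.mk _ (MvPowerSeries.X 0))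
    (hy : y = Ideal.Quotient.mk _ (MvPowerSeries.X 1)) :
    IsZero
      (((Tor (ModuleCat
          (MvPowerSeries (Fin 3) k ⧸
            Ideal.span {(MvPowerSeries.X 0 * MvPowerSeries.X 1 : MvPowerSeries (Fin 3) k)})) 1).obj
        (ModuleCat.of _ (_ ⧸ (Ideal.span {x ^ 2})))).obj
        (ModuleCat.of _ (_ ⧸ (Ideal.span {y})))) ∧
    ¬ IsZero
      (((Tor (ModuleCat
          (MvPowerSeries (Fin 3) k ⧸
            Ideal.span {(MvPowerSeries.X 0 * MvPowerSeries.X 1 : MvPowerSeries (Fin 3) k)})) 2).obj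
        (ModuleCat.of _ (_ ⧸ (Ideal.span {x ^ 2})))).obj
        (ModuleCat.of _ (_ ⧸ (Ideal.span {y})))) := by
  subst hx hy
  have h := stmt7_general (isExactPair_mk_X (k := k) (0 : Fin 3) 1) (disjoint_span_mk_X zero_ne_one)
    (not_isCoprime_mk_X 0 1) two_ne_zero
  exact ⟨(h 1).1 odd_one, (h 2).2 even_two two_ne_zero⟩
end
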